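/- Proposition 4: Let n ≥ 3 and let ψ be a pure n-qubit state satisfying the preferred-basis condition. Define s_k for 2 ≤ k ≤ n by: s_{n-1} = 2, s_{n-2} = 4, and s_k = C(n-k+1, 2) for 2 ≤ k ≤ n-3. If M(ρ_ψ) > s_k, then ψ is not k-product: there is no partition of the n qubits into k nonempty blocks over which ψ is a product of pure states. -/

import Mathlib

noncomputable def pauli : ℕ → Matrix (Fin 2) (Fin 2) ℂ
  | 1 => !![0, 1; 1, 0]
  | 2 => !![0, -Complex.I; Complex.I, 0]
  | 3 => !![1, 0; 0, -1]
  | _ => 1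

/-- The `ι`-fold Kronecker product of single-qubit operators `pauli (f k)`. -/
noncomputable def kronOp {ι : Type*} [Fintype ι] [DecidableEq ι] (f : ι → ℕ) :
    Matrix (ι → Fin 2) (ι → Fin 2) ℂ :=
  Matrix.of fun x y => ∏ k, pauli (f k) (x k) (y k)

/-- Two-body correlation `T^{kl}_{ij}(ρ)`. -/
noncomputable def corr {ι : Type*} [Fintype ι] [DecidableEq ι]
    (ρ : Matrix (ι → Fin 2) (ι → Fin 2) ℂ) (k l : ι) (i j : ℕ) : ℝ :=
  ((ρ * kronOp (fun q => if q = k then i else if q = l then j else 0)).trace).re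

/-- Single-qubit Bloch vector component `b^{(q)}_i(ρ)`. -/
noncomputable def bloch {ι : Type*} [Fintype ι] [DecidableEq ι]
    (ρ : Matrix (ι → Fin 2) (ι → Fin 2) ℂ) (q : ι) (i : ℕ) : ℝ :=
  ((ρ * kronOp (fun p => if p = q then i else 0)).trace).re

/-- `M_{kl}(ρ)`. -/
noncomputable def Mkl {ι : Type*} [Fintype ι] [DecidableEq ι]
    (ρ : Matrix (ι → Fin 2) (ι → Fin 2) ℂ) (k l : ι) : ℝ :=
  ∑ i ∈ Finset.Icc 1 2, ∑ j ∈ Finset.Icc 1 2, (corr ρ k l i j) ^ 2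

/-- `M(ρ) = Σ_{k<l} M_{kl}(ρ)`. -/
noncomputable def Mtot {ι : Type*} [Fintype ι] [LinearOrder ι]
    (ρ : Matrix (ι → Fin 2) (ι → Fin 2) ℂ) : ℝ :=
  ∑ p ∈ Finset.univ.filter (fun p : ι × ι => p.1 < p.2), Mkl ρ p.1 p.2

/-- Density matrix of a pure state `ψ`: `ρ_ψ = ψ ψ†`. -/
noncomputable def pureDensity {ι : Type*} [Fintype ι] [DecidableEq ι]
    (ψ : (ι → Fin 2) → ℂ) : Matrix (ι → Fin 2) (ι → Fin 2) ℂ :=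
  Matrix.of fun x y => ψ x * (starRingEnd ℂ) (ψ y)

/-- `ψ` is a unit vector. -/
def UnitVec {ι : Type*} [Fintype ι] [DecidableEq ι] (ψ : (ι → Fin 2) → ℂ) : Prop :=
  ∑ x, Complex.normSq (ψ x) = 1

/-- Preferred-basis condition: all transverse Bloch components vanish. -/
def PreferredBasis {ι : Type*} [Fintype ι] [DecidableEq ι]
    (ρ : Matrix (ι → Fin 2) (ι → Fin 2) ℂ) : Prop :=
  ∀ q : ι, bloch ρ q 1 = 0 ∧ bloch ρ q 2 = 0

/-- `P` is a partition of `Fin n` into `k` nonempty blocks. -/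
def IsPartition {n k : ℕ} (P : Fin k → Finset (Fin n)) : Prop :=
  (∀ m, (P m).Nonempty) ∧ (∀ m m', m ≠ m' → Disjoint (P m) (P m')) ∧
    ∀ q : Fin n, ∃ m, q ∈ P m

/-- Restriction of an `n`-bit string to a block of qubits. -/
def restrictB {n : ℕ} (S : Finset (Fin n)) (f : Fin n → Fin 2) : (↥S → Fin 2) :=
  fun q => f q.val

/-- `ψ` is the tensor product, under the canonical qubit-reordering isomorphism,
of pure states on the blocks of `P`. -/
def IsProductOver {n k : ℕ} (ψ : (Fin n → Fin 2) → ℂ) (P : Fin k → Finset (Fin n)) : Prop :=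
  ∃ φ : (m : Fin k) → ((↥(P m) → Fin 2) → ℂ),
    (∀ m, UnitVec (φ m)) ∧ ∀ f : Fin n → Fin 2, ψ f = ∏ m, φ m (restrictB (P m) f)

/-!
Multi-qubit Pauli operators differing by an anticommutation on one site anticommute, and the squared
expectations of pairwise anticommuting Hermitian involutions sum to at most one. Hence
`M_{kl} ≤ 2`, and `M_{kl} + M_{km} ≤ 2` for `l ≠ m`, so a block of `d + 1` qubits contributes at most
`max (2 d) (d (d + 1) / 2)` to `M`. Between different blocks of a product state, correlations are
products of Bloch components, which vanish in the preferred basis. Finally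
`d ↦ d * max 2 ((d + 1) / 2)` is superadditive, so for fixed `k` the bound is largest when all the
excess `n - k` is concentrated in a single block.
-/

section Anticommuting

open scoped ComplexOrder

lemma sum_smul_mul_self_of_anticommute {R A κ : Type*} [CommRing R] [Ring A] [Algebra R A]
    (s : Finset κ) (a : κ → R) {x : κ → A} (hsq : ∀ r ∈ s, x r * x r = 1)
    (hanti : (s : Set κ).Pairwise fun r t => x r * x t = -(x t * x r)) :
    (∑ r ∈ s, a r • x r) * ∑ r ∈ s, a r • x r = (∑ r ∈ s, a r ^ 2) • (1 : A) := by
  classical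
  induction s using Finset.induction_on with
  | empty => simp
  | insert t s ht ih =>
    have hcross : x t * ∑ r ∈ s, a r • x r = -((∑ r ∈ s, a r • x r) * x t) := by
      rw [Finset.mul_sum, Finset.sum_mul, ← Finset.sum_neg_distrib]
      refine Finset.sum_congr rfl fun r hr => ?_
      have htr : t ≠ r := fun h => ht (h ▸ hr)
      rw [mul_smul_comm, smul_mul_assoc,
        hanti (Finset.mem_insert_self t s) (Finset.mem_insert_of_mem hr) htr, smul_neg]
    have ih' := ih (fun r hr => hsq r (Finset.mem_insert_of_mem hr))
      (hanti.mono (Finset.coe_subset.mpr (Finset.subset_insert t s)))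
    rw [Finset.sum_insert ht, Finset.sum_insert ht, add_mul, mul_add, mul_add, ih',
      smul_mul_smul_comm, hsq t (Finset.mem_insert_self t s), smul_mul_assoc, hcross,
      mul_smul_comm, smul_neg, add_smul, sq]
    abel

lemma sum_sq_re_trace_mul_le_one {X κ : Type*} [Fintype X] [DecidableEq X] {ρ : Matrix X X ℂ}
    (hρ : ρ.PosSemidef) (htr : ρ.trace = 1) (s : Finset κ) {A : κ → Matrix X X ℂ}
    (hherm : ∀ r ∈ s, (A r).IsHermitian) (hsq : ∀ r ∈ s, A r * A r = 1)
    (hanti : (s : Set κ).Pairwise fun r t => A r * A t = -(A t * A r)) :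
    ∑ r ∈ s, (ρ * A r).trace.re ^ 2 ≤ 1 := by
  set a : κ → ℝ := fun r => (ρ * A r).trace.re with ha
  set B := ∑ r ∈ s, a r • A r with hB
  have hB_herm : B.conjTranspose = B := by
    rw [hB, Matrix.conjTranspose_sum]
    exact Finset.sum_congr rfl fun r hr => by
      rw [Matrix.conjTranspose_smul, star_trivial, (hherm r hr).eq]
  have hB_sq : B * B = (∑ r ∈ s, a r ^ 2) • 1 := sum_smul_mul_self_of_anticommute s a hsq hanti
  have hB_exp : (ρ * B).trace.re = ∑ r ∈ s, a r ^ 2 := by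
    simp only [hB, Matrix.mul_sum, Matrix.trace_sum, Matrix.mul_smul, Matrix.trace_smul,
      Complex.re_sum, Complex.smul_re, smul_eq_mul, ha, sq]
  -- Positivity of the expectation of `(1 - B)²`, which equals `1 - ∑ a r ^ 2`.
  have hpos : 0 ≤ ((1 - B) * ρ * (1 - B).conjTranspose).trace.re :=
    (Complex.nonneg_iff.mp (hρ.mul_mul_conjTranspose_same (1 - B)).trace_nonneg).1
  have hexpand : ((1 - B) * ρ * (1 - B).conjTranspose).trace.re = 1 - ∑ r ∈ s, a r ^ 2 := by
    have hsquare : (1 - B) * (1 - B) = 1 + B * B - (B + B) := by noncomm_ring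
    rw [Matrix.conjTranspose_sub, Matrix.conjTranspose_one, hB_herm, Matrix.trace_mul_comm,
      ← mul_assoc, Matrix.trace_mul_comm, hsquare, hB_sq]
    simp only [mul_sub, mul_add, mul_one, Matrix.mul_smul, Matrix.trace_sub, Matrix.trace_add,
      Matrix.trace_smul, htr, Complex.sub_re, Complex.add_re, Complex.smul_re, Complex.one_re,
      smul_eq_mul, hB_exp]
    ring
  linarith

end Anticommuting

section Pauli

lemma pauli_isHermitian (a : ℕ) : (pauli a).IsHermitian := by
  match a with
  | 0 | _ + 4 => exact Matrix.isHermitian_one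
  | 1 | 2 | 3 => ext i j; fin_cases i <;> fin_cases j <;> simp [pauli]

lemma pauli_mul_self (a : ℕ) : pauli a * pauli a = 1 := by
  match a with
  | 0 | _ + 4 => exact mul_one 1
  | 1 | 2 | 3 => ext i j; fin_cases i <;> fin_cases j <;> simp [pauli, Matrix.mul_apply]

lemma pauli_mul_pauli_of_ne {a b : ℕ} (ha : a ∈ Finset.Icc 1 3) (hb : b ∈ Finset.Icc 1 3)
    (hab : a ≠ b) : pauli a * pauli b = -(pauli b * pauli a) := by
  rw [Finset.mem_Icc] at ha hb
  obtain ⟨ha1, ha3⟩ := ha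
  obtain ⟨hb1, hb3⟩ := hb
  interval_cases a <;> interval_cases b <;> first
    | exact absurd rfl hab
    | ext i j; fin_cases i <;> fin_cases j <;> simp [pauli, Matrix.mul_apply]

end Pauli

section PairLabel

variable {ι : Type*} [DecidableEq ι]

/-- The labels of the Pauli string with `σ_i` at qubit `k`, `σ_j` at qubit `l` and the identity
elsewhere, whose expectation is `T^{kl}_{ij}`. -/
def pairLabel (k l : ι) (i j : ℕ) : ι → ℕ :=
  fun q => if q = k then i else if q = l then j else 0

lemma pairLabel_comm {k l : ι} (hkl : k ≠ l) (i j : ℕ) :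
    pairLabel k l i j = pairLabel l k j i := by
  ext q
  by_cases hq : q = k
  · simp [pairLabel, hq, hkl]
  · simp [pairLabel, hq]

end PairLabel

section KronOp

variable {ι : Type*} [Fintype ι] [DecidableEq ι]

lemma kronOp_mul_kronOp (f g : ι → ℕ) :
    kronOp f * kronOp g =
      Matrix.of fun x y => ∏ q, (pauli (f q) * pauli (g q)) (x q) (y q) := by
  ext x y
  simp only [Matrix.mul_apply, kronOp, Matrix.of_apply, ← Finset.prod_mul_distrib,
    Finset.prod_univ_sum, Fintype.piFinset_univ]

lemma kronOp_zero : kronOp (0 : ι → ℕ) = 1 := by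
  ext x y
  simp only [kronOp, pauli, Pi.zero_apply, Matrix.of_apply, Matrix.one_apply,
    Finset.prod_ite_zero, Finset.mem_univ, forall_const, Finset.prod_const_one, funext_iff]

lemma kronOp_mul_self (f : ι → ℕ) : kronOp f * kronOp f = 1 := by
  rw [← kronOp_zero, kronOp_mul_kronOp]
  simp only [pauli_mul_self]
  rfl

lemma kronOp_isHermitian (f : ι → ℕ) : (kronOp f).IsHermitian := by
  ext x y
  simp only [Matrix.conjTranspose_apply, kronOp, Matrix.of_apply, star_prod]
  exact Finset.prod_congr rfl fun q _ => (pauli_isHermitian (f q)).apply (x q) (y q)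

lemma kronOp_mul_kronOp_of_anticommute_at {f g : ι → ℕ} (q : ι)
    (hq : pauli (f q) * pauli (g q) = -(pauli (g q) * pauli (f q)))
    (hcomm : ∀ p ≠ q, Commute (pauli (f p)) (pauli (g p))) :
    kronOp f * kronOp g = -(kronOp g * kronOp f) := by
  ext x y
  simp only [kronOp_mul_kronOp, Matrix.neg_apply, Matrix.of_apply]
  rw [← Finset.mul_prod_erase _ _ (Finset.mem_univ q),
    ← Finset.mul_prod_erase _ _ (Finset.mem_univ q), hq, Matrix.neg_apply, neg_mul]
  congr 2
  exact Finset.prod_congr rfl fun p hp => by rw [(hcomm p (Finset.ne_of_mem_erase hp)).eq]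

lemma kronOp_pairLabel_pairwise_anticommute {k l : ι} (hkl : k ≠ l) (i : ℕ) :
    ((Finset.Icc 1 3 : Finset ℕ) : Set ℕ).Pairwise fun j j' =>
      kronOp (pairLabel k l i j) * kronOp (pairLabel k l i j') =
        -(kronOp (pairLabel k l i j') * kronOp (pairLabel k l i j)) := by
  refine fun j hj j' hj' hne => kronOp_mul_kronOp_of_anticommute_at l ?_ fun p hp => ?_
  · simpa [pairLabel, hkl.symm] using pauli_mul_pauli_of_ne hj hj' hne
  · simp [pairLabel, hp]

lemma kronOp_pairLabel_anticommute (k : ι) {l m : ι} (hlm : l ≠ m) {i i' : ℕ}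
    (hi : i ∈ Finset.Icc 1 3) (hi' : i' ∈ Finset.Icc 1 3) (hii' : i ≠ i') (j j' : ℕ) :
    kronOp (pairLabel k l i j) * kronOp (pairLabel k m i' j') =
      -(kronOp (pairLabel k m i' j') * kronOp (pairLabel k l i j)) := by
  refine kronOp_mul_kronOp_of_anticommute_at k ?_ fun p hp => ?_
  · simpa [pairLabel] using pauli_mul_pauli_of_ne hi hi' hii'
  · by_cases hpl : p = l
    · subst hpl
      simp [pairLabel, hp, hlm, pauli]
    · simp [pairLabel, hp, hpl, pauli]

lemma ofReal_re_trace_mul_kronOp {ρ : Matrix (ι → Fin 2) (ι → Fin 2) ℂ} (hρ : ρ.IsHermitian)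
    (f : ι → ℕ) : (((ρ * kronOp f).trace.re : ℝ) : ℂ) = (ρ * kronOp f).trace := by
  rw [← Complex.conj_eq_iff_re, ← Complex.star_def, ← Matrix.trace_conjTranspose,
    Matrix.conjTranspose_mul, hρ.eq, (kronOp_isHermitian f).eq, Matrix.trace_mul_comm]

end KronOp

section Correlations

open scoped ComplexOrder

variable {ι : Type*} [Fintype ι] [DecidableEq ι] {ρ : Matrix (ι → Fin 2) (ι → Fin 2) ℂ}

lemma bloch_eq_re_trace (ρ : Matrix (ι → Fin 2) (ι → Fin 2) ℂ) (q : ι) (i : ℕ) :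
    bloch ρ q i = (ρ * kronOp (Pi.single q i)).trace.re := by
  have hlabel : (fun p => if p = q then i else 0) = (Pi.single q i : ι → ℕ) :=
    funext fun p => (Pi.single_apply q i p).symm
  rw [bloch, hlabel]

lemma corr_eq_re_trace (ρ : Matrix (ι → Fin 2) (ι → Fin 2) ℂ) (k l : ι) (i j : ℕ) :
    corr ρ k l i j = (ρ * kronOp (pairLabel k l i j)).trace.re := rfl

lemma corr_comm (ρ : Matrix (ι → Fin 2) (ι → Fin 2) ℂ) {k l : ι} (hkl : k ≠ l) (i j : ℕ) :
    corr ρ k l i j = corr ρ l k j i := by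
  rw [corr_eq_re_trace, corr_eq_re_trace, pairLabel_comm hkl]

lemma Mkl_comm (ρ : Matrix (ι → Fin 2) (ι → Fin 2) ℂ) {k l : ι} (hkl : k ≠ l) :
    Mkl ρ k l = Mkl ρ l k := by
  simp only [Mkl, corr_comm ρ hkl]
  exact Finset.sum_comm

lemma sum_sq_corr_le_one (hρ : ρ.PosSemidef) (htr : ρ.trace = 1) {k l : ι} (hkl : k ≠ l) (i : ℕ)
    {J : Finset ℕ} (hJ : J ⊆ Finset.Icc 1 3) : ∑ j ∈ J, corr ρ k l i j ^ 2 ≤ 1 := by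
  simp only [corr_eq_re_trace]
  exact sum_sq_re_trace_mul_le_one hρ htr J (fun _ _ => kronOp_isHermitian _)
    (fun _ _ => kronOp_mul_self _)
    ((kronOp_pairLabel_pairwise_anticommute hkl i).mono (Finset.coe_subset.mpr hJ))

lemma Mkl_le_two (hρ : ρ.PosSemidef) (htr : ρ.trace = 1) {k l : ι} (hkl : k ≠ l) :
    Mkl ρ k l ≤ 2 := by
  have hJ : Finset.Icc 1 2 ⊆ Finset.Icc 1 3 := Finset.Icc_subset_Icc_right (by decide)
  have hsum := Finset.sum_le_card_nsmul (Finset.Icc 1 2) _ 1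
    fun i _ => sum_sq_corr_le_one hρ htr hkl i hJ
  simpa [Mkl] using hsum

lemma sum_sq_corr_add_sum_sq_corr_le_one (hρ : ρ.PosSemidef) (htr : ρ.trace = 1) {k l m : ι}
    (hkl : k ≠ l) (hkm : k ≠ m) (hlm : l ≠ m) {i i' : ℕ} (hi : i ∈ Finset.Icc 1 3)
    (hi' : i' ∈ Finset.Icc 1 3) (hii' : i ≠ i') {J : Finset ℕ} (hJ : J ⊆ Finset.Icc 1 3) :
    ∑ j ∈ J, corr ρ k l i j ^ 2 + ∑ j ∈ J, corr ρ k m i' j ^ 2 ≤ 1 := by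
  have hleft := (kronOp_pairLabel_pairwise_anticommute hkl i).mono (Finset.coe_subset.mpr hJ)
  have hright := (kronOp_pairLabel_pairwise_anticommute hkm i').mono (Finset.coe_subset.mpr hJ)
  have hmixed := kronOp_pairLabel_anticommute k hlm hi hi' hii'
  have hsum := sum_sq_re_trace_mul_le_one hρ htr (J.disjSum J)
    (A := Sum.elim (fun j => kronOp (pairLabel k l i j)) fun j => kronOp (pairLabel k m i' j))
    (by rintro (j | j) - <;> exact kronOp_isHermitian _)
    (by rintro (j | j) - <;> exact kronOp_mul_self _)
    (by
      rintro (j | j) hj (j' | j') hj' hne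
      · exact hleft (by simpa using hj) (by simpa using hj') (by simpa using hne)
      · exact hmixed j j'
      · exact (neg_eq_iff_eq_neg.mpr (hmixed j' j)).symm
      · exact hright (by simpa using hj) (by simpa using hj') (by simpa using hne))
  simpa only [Finset.sum_disjSum, Sum.elim_inl, Sum.elim_inr, ← corr_eq_re_trace] using hsum

lemma Mkl_add_Mkl_le_two (hρ : ρ.PosSemidef) (htr : ρ.trace = 1) {k l m : ι} (hkl : k ≠ l)
    (hkm : k ≠ m) (hlm : l ≠ m) : Mkl ρ k l + Mkl ρ k m ≤ 2 := by
  have hJ : Finset.Icc 1 2 ⊆ Finset.Icc 1 3 := Finset.Icc_subset_Icc_right (by decide)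
  have h12 := sum_sq_corr_add_sum_sq_corr_le_one hρ htr hkl hkm hlm (i := 1) (i' := 2)
    (by decide) (by decide) (by decide) hJ
  have h21 := sum_sq_corr_add_sum_sq_corr_le_one hρ htr hkl hkm hlm (i := 2) (i' := 1)
    (by decide) (by decide) (by decide) hJ
  have hIcc : Finset.Icc 1 2 = ({1, 2} : Finset ℕ) := rfl
  simp only [Mkl, hIcc, Finset.sum_pair (by decide : 1 ≠ 2)] at h12 h21 ⊢
  linarith

end Correlations

section Product

variable {ι : Type*} [DecidableEq ι]

lemma sum_mul_sum_eq_of_piecewise {α R : Type*} [Fintype ι] [Fintype α] [CommSemiring R]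
    (S : Finset ι) {F G F' G' : (ι → α) → R}
    (h : ∀ x x', F x * G x' = F' (S.piecewise x x') * G' (S.piecewise x' x)) :
    (∑ x, F x) * ∑ x, G x = (∑ x, F' x) * ∑ x, G' x := by
  let swap : (ι → α) × (ι → α) → (ι → α) × (ι → α) :=
    fun p => (S.piecewise p.1 p.2, S.piecewise p.2 p.1)
  have hswap : Function.Involutive swap := fun p => by
    simp only [swap, Finset.piecewise_idem_left, Finset.piecewise_idem_right,
      Finset.piecewise_same]
  rw [Fintype.sum_mul_sum, Fintype.sum_mul_sum, ← Fintype.sum_prod_type',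
    ← Fintype.sum_prod_type']
  exact Fintype.sum_equiv hswap.toPerm _ _ fun p => h p.1 p.2

/-- The state `ρ` is uncorrelated between the qubits in `S` and those outside `S`. A matrix is a
Kronecker product along this cut iff exchanging the `S`-parts of the indices of two of its entries
does not change their product; this avoids splitting the index type. -/
def FactorsAcross (S : Finset ι) (ρ : Matrix (ι → Fin 2) (ι → Fin 2) ℂ) : Prop :=
  ∀ x y x' y', ρ x y * ρ x' y' =
    ρ (S.piecewise x x') (S.piecewise y y') * ρ (S.piecewise x' x) (S.piecewise y' y)

variable [Fintype ι]

lemma kronOp_apply_mul_kronOp_apply (S : Finset ι) (f g : ι → ℕ) (x y x' y' : ι → Fin 2) :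
    kronOp f x y * kronOp g x' y' =
      kronOp (S.piecewise f g) (S.piecewise x x') (S.piecewise y y') *
        kronOp (S.piecewise g f) (S.piecewise x' x) (S.piecewise y' y) := by
  simp only [kronOp, Matrix.of_apply, ← Finset.prod_mul_distrib]
  refine Finset.prod_congr rfl fun q _ => ?_
  by_cases hq : q ∈ S
  · simp only [Finset.piecewise_eq_of_mem _ _ _ hq]
  · simp only [Finset.piecewise_eq_of_notMem _ _ _ hq, mul_comm]

variable {S : Finset ι} {ρ : Matrix (ι → Fin 2) (ι → Fin 2) ℂ}

lemma FactorsAcross.trace_mul_trace (hS : FactorsAcross S ρ) (f g : ι → ℕ) :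
    (ρ * kronOp f).trace * (ρ * kronOp g).trace =
      (ρ * kronOp (S.piecewise f g)).trace * (ρ * kronOp (S.piecewise g f)).trace := by
  simp only [Matrix.trace, Matrix.diag, Matrix.mul_apply]
  refine sum_mul_sum_eq_of_piecewise S fun x x' => sum_mul_sum_eq_of_piecewise S fun y y' => ?_
  rw [mul_mul_mul_comm, hS, kronOp_apply_mul_kronOp_apply S, mul_mul_mul_comm]

lemma FactorsAcross.corr_eq_bloch_mul_bloch (hS : FactorsAcross S ρ) (hρ : ρ.IsHermitian)
    (htr : ρ.trace = 1) {k l : ι} (hk : k ∈ S) (hl : l ∉ S) (i j : ℕ) :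
    corr ρ k l i j = bloch ρ k i * bloch ρ l j := by
  have hin : S.piecewise (pairLabel k l i j) 0 = Pi.single k i := by
    ext q
    by_cases hq : q ∈ S
    · simp [pairLabel, hq, Pi.single_apply, ne_of_mem_of_not_mem hq hl]
    · simp [hq, (ne_of_mem_of_not_mem hk hq).symm]
  have hout : S.piecewise (0 : ι → ℕ) (pairLabel k l i j) = Pi.single l j := by
    ext q
    by_cases hq : q ∈ S
    · simp [hq, ne_of_mem_of_not_mem hq hl]
    · simp [pairLabel, hq, Pi.single_apply, (ne_of_mem_of_not_mem hk hq).symm]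
  have htrace := hS.trace_mul_trace (pairLabel k l i j) 0
  rw [kronOp_zero, mul_one, htr, mul_one, hin, hout] at htrace
  rw [← ofReal_re_trace_mul_kronOp hρ (pairLabel k l i j), ← corr_eq_re_trace,
    ← ofReal_re_trace_mul_kronOp hρ (Pi.single k i), ← bloch_eq_re_trace,
    ← ofReal_re_trace_mul_kronOp hρ (Pi.single l j), ← bloch_eq_re_trace] at htrace
  exact_mod_cast htrace

lemma FactorsAcross.Mkl_eq_zero (hS : FactorsAcross S ρ) (hρ : ρ.IsHermitian)
    (htr : ρ.trace = 1) (hpb : PreferredBasis ρ) {k l : ι} (hk : k ∈ S) (hl : l ∉ S) :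
    Mkl ρ k l = 0 := by
  refine Finset.sum_eq_zero fun i hi => Finset.sum_eq_zero fun j _ => ?_
  have hbloch : bloch ρ k i = 0 := by
    rw [Finset.mem_Icc] at hi
    obtain rfl | rfl : i = 1 ∨ i = 2 := by omega
    exacts [(hpb k).1, (hpb k).2]
  rw [hS.corr_eq_bloch_mul_bloch hρ htr hk hl, hbloch, zero_mul, zero_pow two_ne_zero]

end Product

section PairSums

lemma sum_le_card_mul_of_pairwise_add_le {κ : Type*} {s : Finset κ} {w : κ → ℝ} {c : ℝ}
    (hs : 2 ≤ s.card) (hw : (s : Set κ).Pairwise fun a b => w a + w b ≤ 2 * c) :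
    ∑ a ∈ s, w a ≤ s.card * c := by
  classical
  by_cases hall : ∀ a ∈ s, w a ≤ c
  · simpa using Finset.sum_le_card_nsmul s w c hall
  push Not at hall
  obtain ⟨a, ha, hac⟩ := hall
  have hrest : ∑ b ∈ s.erase a, w b ≤ (s.card - 1) * (2 * c - w a) := by
    have hle := Finset.sum_le_card_nsmul (s.erase a) w (2 * c - w a) fun b hb => by
      have hab := hw ha (Finset.mem_of_mem_erase hb) (Finset.ne_of_mem_erase hb).symm
      linarith
    rwa [nsmul_eq_mul, Finset.cast_card_erase_of_mem ha] at hle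
  have hcard : (2 : ℝ) ≤ s.card := by exact_mod_cast hs
  rw [← Finset.add_sum_erase s w ha]
  nlinarith

lemma two_mul_sum_filter_lt {ι : Type*} [Fintype ι] [LinearOrder ι] {w : ι → ι → ℝ}
    (hw : ∀ a b, a ≠ b → w a b = w b a) :
    2 * ∑ p ∈ Finset.univ.filter (fun p : ι × ι => p.1 < p.2), w p.1 p.2 =
      ∑ a, ∑ b ∈ Finset.univ.erase a, w a b := by
  have hswap : ∑ a, ∑ b, (if b < a then w a b else 0) = ∑ a, ∑ b, if a < b then w a b else 0 := by
    rw [Finset.sum_comm]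
    refine Finset.sum_congr rfl fun a _ => Finset.sum_congr rfl fun b _ => ?_
    split_ifs with h
    exacts [hw b a h.ne', rfl]
  have hsplit : ∀ a, ∑ b ∈ Finset.univ.erase a, w a b =
      ∑ b, ((if a < b then w a b else 0) + if b < a then w a b else 0) := by
    intro a
    rw [← Finset.filter_ne, Finset.sum_filter]
    refine Finset.sum_congr rfl fun b _ => ?_
    rcases lt_trichotomy a b with h | rfl | h
    · simp [h, h.ne, h.not_gt]
    · simp
    · simp [h, h.ne', h.not_gt]
  simp only [hsplit, Finset.sum_add_distrib]
  rw [hswap, Finset.sum_filter, Fintype.sum_prod_type, two_mul]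

lemma sum_sum_erase_eq_sum_blocks {ι κ R : Type*} [Fintype ι] [DecidableEq ι] [Fintype κ]
    [AddCommMonoid R] {P : κ → Finset ι} (hdisj : Pairwise fun m m' => Disjoint (P m) (P m'))
    (hcover : Finset.univ.biUnion P = Finset.univ) {w : ι → ι → R}
    (hw : ∀ m, ∀ a ∈ P m, ∀ b ∉ P m, w a b = 0) :
    ∑ a, ∑ b ∈ Finset.univ.erase a, w a b = ∑ m, ∑ a ∈ P m, ∑ b ∈ (P m).erase a, w a b := by
  have hblock : ∀ m, ∀ a ∈ P m,
      ∑ b ∈ (P m).erase a, w a b = ∑ b ∈ Finset.univ.erase a, w a b := fun m a ha => by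
    refine Finset.sum_subset (Finset.erase_subset_erase a (Finset.subset_univ _)) ?_
    exact fun b hb hbm => hw m a ha b fun hb' =>
      hbm (Finset.mem_erase.mpr ⟨Finset.ne_of_mem_erase hb, hb'⟩)
  nth_rewrite 1 [← hcover]
  rw [Finset.sum_biUnion (hdisj.set_pairwise _)]
  exact Finset.sum_congr rfl fun m _ => Finset.sum_congr rfl fun a ha => (hblock m a ha).symm

lemma two_mul_Mtot {ι : Type*} [Fintype ι] [LinearOrder ι]
    (ρ : Matrix (ι → Fin 2) (ι → Fin 2) ℂ) :
    2 * Mtot ρ = ∑ a, ∑ b ∈ Finset.univ.erase a, Mkl ρ a b :=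
  two_mul_sum_filter_lt fun _ _ hab => Mkl_comm ρ hab

end PairSums

section ProductBound

/-- The bound on `M` for product states of `n` qubits with `k` blocks, as a function of the
excess `d = n - k`; the paper's `s_k` is `productBound (n - k)`. -/
noncomputable def productBound (d : ℕ) : ℝ := d * max 2 (((d : ℝ) + 1) / 2)

lemma sum_productBound_le {κ : Type*} (s : Finset κ) (d : κ → ℕ) :
    ∑ m ∈ s, productBound (d m) ≤ productBound (∑ m ∈ s, d m) := by
  simp only [productBound]
  push_cast
  rw [Finset.sum_mul]
  refine Finset.sum_le_sum fun m hm => ?_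
  have hle : (d m : ℝ) ≤ ∑ m ∈ s, (d m : ℝ) :=
    Finset.single_le_sum (fun m _ => Nat.cast_nonneg (d m)) hm
  gcongr

lemma productBound_sub_eq_ite {n : ℕ} (hn : 0 < n) (k : ℕ) :
    productBound (n - k) =
      if k = n - 1 then 2 else if k = n - 2 then 4 else ((n - k + 1).choose 2 : ℝ) := by
  split_ifs with h1 h2
  · have hd : n - k = 1 := by omega
    norm_num [productBound, hd]
  · have hd : n - k = 2 := by omega
    norm_num [productBound, hd]
  · rw [Nat.cast_choose_two, productBound]
    obtain hd | hd : n - k = 0 ∨ 3 ≤ n - k := by omega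
    · simp [hd]
    · have hmax : (2 : ℝ) ≤ ((n - k : ℕ) + 1) / 2 := by
        have : (3 : ℝ) ≤ (n - k : ℕ) := by exact_mod_cast hd
        linarith
      rw [max_eq_right hmax]
      push_cast
      ring

end ProductBound

section Blocks

open scoped ComplexOrder

variable {ι : Type*} [Fintype ι] [DecidableEq ι] {ρ : Matrix (ι → Fin 2) (ι → Fin 2) ℂ}

lemma sum_erase_Mkl_le (hρ : ρ.PosSemidef) (htr : ρ.trace = 1) {S : Finset ι} {k : ι}
    (hk : k ∈ S) (hS : 3 ≤ S.card) : ∑ l ∈ S.erase k, Mkl ρ k l ≤ S.card - 1 := by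
  have hpair : ((S.erase k : Finset ι) : Set ι).Pairwise fun l m =>
      Mkl ρ k l + Mkl ρ k m ≤ 2 * 1 := fun l hl m hm hlm => by
    rw [mul_one]
    exact Mkl_add_Mkl_le_two hρ htr (Finset.ne_of_mem_erase hl).symm
      (Finset.ne_of_mem_erase hm).symm hlm
  have hcard : 2 ≤ (S.erase k).card := by
    rw [Finset.card_erase_of_mem hk]
    omega
  simpa only [Finset.cast_card_erase_of_mem hk, mul_one] using
    sum_le_card_mul_of_pairwise_add_le hcard hpair

lemma sum_sum_erase_Mkl_le_two_mul (hρ : ρ.PosSemidef) (htr : ρ.trace = 1) (S : Finset ι) :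
    ∑ k ∈ S, ∑ l ∈ S.erase k, Mkl ρ k l ≤ S.card * (2 * (S.card - 1 : ℕ)) := by
  have hrow : ∀ k ∈ S, ∑ l ∈ S.erase k, Mkl ρ k l ≤ 2 * (S.card - 1 : ℕ) := fun k hk => by
    rw [← Finset.card_erase_of_mem hk, mul_comm, ← nsmul_eq_mul]
    exact Finset.sum_le_card_nsmul _ _ _ fun l hl =>
      Mkl_le_two hρ htr (Finset.ne_of_mem_erase hl).symm
  simpa only [nsmul_eq_mul] using Finset.sum_le_card_nsmul S _ _ hrow

lemma sum_sum_erase_Mkl_le_productBound (hρ : ρ.PosSemidef) (htr : ρ.trace = 1) (S : Finset ι) :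
    ∑ k ∈ S, ∑ l ∈ S.erase k, Mkl ρ k l ≤ 2 * productBound (S.card - 1) := by
  rcases le_or_gt S.card 2 with hS | hS
  · have hcard : (S.card : ℝ) ≤ 2 := by exact_mod_cast hS
    calc ∑ k ∈ S, ∑ l ∈ S.erase k, Mkl ρ k l ≤ S.card * (2 * (S.card - 1 : ℕ)) :=
          sum_sum_erase_Mkl_le_two_mul hρ htr S
      _ ≤ 2 * ((S.card - 1 : ℕ) * 2) := by
          rw [mul_comm 2 ((S.card - 1 : ℕ) : ℝ)]
          gcongr
      _ ≤ 2 * productBound (S.card - 1) := by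
          rw [productBound]
          gcongr
          exact le_max_left _ _
  · have hrows := Finset.sum_le_card_nsmul S _ _ fun k hk => sum_erase_Mkl_le hρ htr hk hS
    calc ∑ k ∈ S, ∑ l ∈ S.erase k, Mkl ρ k l ≤ S.card * (S.card - 1) := by
          simpa only [nsmul_eq_mul] using hrows
      _ = 2 * ((S.card - 1 : ℕ) * (((S.card - 1 : ℕ) + 1) / 2)) := by
          rw [Nat.cast_pred (by omega)]
          ring
      _ ≤ 2 * productBound (S.card - 1) := by
          rw [productBound]
          gcongr
          exact le_max_right _ _

end Blocks

section Partition

variable {n k : ℕ} {P : Fin k → Finset (Fin n)}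

lemma IsPartition.pairwise_disjoint (hP : IsPartition P) :
    Pairwise fun m m' => Disjoint (P m) (P m') := fun m m' => hP.2.1 m m'

lemma IsPartition.biUnion_eq_univ (hP : IsPartition P) : Finset.univ.biUnion P = Finset.univ := by
  ext q
  simpa using hP.2.2 q

lemma IsPartition.sum_card_sub_one (hP : IsPartition P) : ∑ m, ((P m).card - 1) = n - k := by
  have hcard : ∑ m, (P m).card = n := by
    rw [← Finset.card_biUnion (hP.pairwise_disjoint.set_pairwise _), hP.biUnion_eq_univ,
      Finset.card_univ, Fintype.card_fin]
  rw [Finset.sum_tsub_distrib _ fun m _ => (hP.1 m).card_pos, hcard, Fin.sum_const, smul_eq_mul,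
    mul_one]

end Partition

section PureState

open scoped ComplexOrder

lemma posSemidef_pureDensity {ι : Type*} [Fintype ι] [DecidableEq ι] (ψ : (ι → Fin 2) → ℂ) :
    (pureDensity ψ).PosSemidef := Matrix.posSemidef_vecMulVec_self_star ψ

lemma UnitVec.trace_pureDensity {ι : Type*} [Fintype ι] [DecidableEq ι] {ψ : (ι → Fin 2) → ℂ}
    (hψ : UnitVec ψ) : (pureDensity ψ).trace = 1 := by
  simp only [Matrix.trace, Matrix.diag, pureDensity, Matrix.of_apply, Complex.mul_conj]
  exact_mod_cast hψ

variable {n k : ℕ} {ψ : (Fin n → Fin 2) → ℂ} {P : Fin k → Finset (Fin n)}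

lemma restrictB_piecewise_of_subset {S T : Finset (Fin n)} (h : T ⊆ S) (x y : Fin n → Fin 2) :
    restrictB T (S.piecewise x y) = restrictB T x :=
  funext fun q => S.piecewise_eq_of_mem x y (h q.2)

lemma restrictB_piecewise_of_disjoint {S T : Finset (Fin n)} (h : Disjoint T S)
    (x y : Fin n → Fin 2) : restrictB T (S.piecewise x y) = restrictB T y :=
  funext fun q => S.piecewise_eq_of_notMem x y (Finset.disjoint_left.mp h q.2)

lemma IsProductOver.apply_mul_apply (hprod : IsProductOver ψ P)
    (hdisj : Pairwise fun m m' => Disjoint (P m) (P m')) (m : Fin k) (x y : Fin n → Fin 2) :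
    ψ x * ψ y = ψ ((P m).piecewise x y) * ψ ((P m).piecewise y x) := by
  obtain ⟨φ, -, hφ⟩ := hprod
  simp only [hφ, ← Finset.prod_mul_distrib]
  refine Finset.prod_congr rfl fun m' _ => ?_
  obtain rfl | hm := eq_or_ne m' m
  · simp only [restrictB_piecewise_of_subset subset_rfl]
  · simp only [restrictB_piecewise_of_disjoint (hdisj hm), mul_comm]

lemma IsProductOver.factorsAcross_pureDensity (hprod : IsProductOver ψ P)
    (hdisj : Pairwise fun m m' => Disjoint (P m) (P m')) (m : Fin k) :
    FactorsAcross (P m) (pureDensity ψ) := fun x y x' y' => by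
  simp only [pureDensity, Matrix.of_apply]
  rw [mul_mul_mul_comm, ← map_mul, hprod.apply_mul_apply hdisj m x x',
    hprod.apply_mul_apply hdisj m y y', map_mul, mul_mul_mul_comm]

end PureState

section MixedState

open scoped ComplexOrder

theorem not_kproduct_of_Mtot_gt_general {n k : ℕ} {ρ : Matrix (Fin n → Fin 2) (Fin n → Fin 2) ℂ}
    (hρ : ρ.PosSemidef) (htr : ρ.trace = 1) (hpb : PreferredBasis ρ)
    (hM : Mtot ρ > productBound (n - k)) :
    ¬ ∃ P : Fin k → Finset (Fin n), IsPartition P ∧ ∀ m, FactorsAcross (P m) ρ := by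
  rintro ⟨P, hP, hfactors⟩
  have hcross : ∀ m, ∀ a ∈ P m, ∀ b ∉ P m, Mkl ρ a b = 0 := fun m a ha b hb =>
    (hfactors m).Mkl_eq_zero hρ.isHermitian htr hpb ha hb
  have htotal : 2 * Mtot ρ ≤ 2 * productBound (n - k) :=
    calc 2 * Mtot ρ = ∑ m, ∑ a ∈ P m, ∑ b ∈ (P m).erase a, Mkl ρ a b := by
          rw [two_mul_Mtot, sum_sum_erase_eq_sum_blocks hP.pairwise_disjoint hP.biUnion_eq_univ
            hcross]
      _ ≤ ∑ m, 2 * productBound ((P m).card - 1) :=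
          Finset.sum_le_sum fun m _ => sum_sum_erase_Mkl_le_productBound hρ htr (P m)
      _ = 2 * ∑ m, productBound ((P m).card - 1) := (Finset.mul_sum _ _ _).symm
      _ ≤ 2 * productBound (∑ m, ((P m).card - 1)) := by
          gcongr
          exact sum_productBound_le _ _
      _ = 2 * productBound (n - k) := by rw [hP.sum_card_sub_one]
  linarith

end MixedState

/-- Proposition 4: with `s_{n-1} = 2`, `s_{n-2} = 4`, and
`s_k = C(n-k+1,2)` for `2 ≤ k ≤ n-3`, if `M(ρ_ψ) > s_k` then the
preferred-basis pure state `ψ` is not `k`-product. -/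
theorem not_kproduct_of_Mtot_gt (n : ℕ) (hn : 3 ≤ n)
    (ψ : (Fin n → Fin 2) → ℂ) (hψ : UnitVec ψ)
    (hpb : PreferredBasis (pureDensity ψ))
    (k : ℕ) (hk2 : 2 ≤ k) (hkn : k ≤ n)
    (hM : Mtot (pureDensity ψ)
      > (if k = n - 1 then 2 else if k = n - 2 then 4
          else ((n - k + 1).choose 2 : ℝ))) :
    ¬ ∃ P : Fin k → Finset (Fin n), IsPartition P ∧ IsProductOver ψ P := by
  rw [← productBound_sub_eq_ite (by omega)] at hM
  rintro ⟨P, hP, hprod⟩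
  exact not_kproduct_of_Mtot_gt_general (posSemidef_pureDensity ψ) hψ.trace_pureDensity hpb hM
    ⟨P, hP, hprod.factorsAcross_pureDensity hP.pairwise_disjoint⟩
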